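/- Consider the SF iteration with arbitrary update directions Δ_t ∈ ℝⁿ, learning rate γ > 0, momentum β ∈ [0,1), and coefficients c_t ∈ (0,1] with c₁ = 1. For 1 ≤ t ≤ T define the weights α_t := [c_t / ((1-c_t)(1-β) + c_t)] · ∏_{s=t+1}^{T} [(1-c_s)(1-β) / ((1-c_s)(1-β) + c_s)]. Then for every T ≥ 1, x_T = Σ_{t=1}^{T} α_t y_t; that is, the SF averaged iterate x_T is an implicit weighted average of the past momentum iterates y₁, ..., y_T. -/

import Mathlib

/-!
STATEMENT 6: The SF averaged iterate x_T is an implicit weighted average of the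
past momentum iterates y₁, ..., y_T:
x_T = Σ_{t=1}^T α_t y_t, where
α_t = [c_t / ((1-c_t)(1-β) + c_t)] · ∏_{s=t+1}^T [(1-c_s)(1-β) / ((1-c_s)(1-β) + c_s)].
-/

/-!
Eliminating `z (t + 1)` between the averaging step for `x (t + 1)` and the definition of
`y (t + 1)` leaves `x (t + 1)` as an affine combination of `x t` and `y (t + 1)`. Since
`c 1 = 1` and `z 1 = x 1` give `x 1 = y 1`, unrolling this linear recursion down to `t = 1`
yields the product weights.
-/

open Finset in
theorem eq_sum_Icc_smul_of_linear_recurrence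
    {R E : Type*} [CommSemiring R] [AddCommMonoid E] [Module R E]
    {p q : ℕ → R} {x y : ℕ → E} {m T : ℕ} (hm : x m = p m • y m)
    (hstep : ∀ t, m ≤ t → x (t + 1) = q (t + 1) • x t + p (t + 1) • y (t + 1))
    (hT : m ≤ T) :
    x T = ∑ t ∈ Icc m T, (p t * ∏ s ∈ Icc (t + 1) T, q s) • y t := by
  induction T, hT using Nat.le_induction with
  | base => simpa using hm
  | succ T hT ih =>
    have weight_succ : ∀ t ∈ Icc m T,
        (p t * ∏ s ∈ Icc (t + 1) (T + 1), q s) • y t =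
          q (T + 1) • (p t * ∏ s ∈ Icc (t + 1) T, q s) • y t := by
      intro t ht
      have htT : t + 1 ≤ T + 1 := Nat.succ_le_succ (mem_Icc.mp ht).2
      rw [prod_Icc_succ_top htT, smul_smul, ← mul_assoc, mul_comm]
    calc x (T + 1) = q (T + 1) • x T + p (T + 1) • y (T + 1) := hstep T hT
      _ = ∑ t ∈ Icc m T, (p t * ∏ s ∈ Icc (t + 1) (T + 1), q s) • y t +
            p (T + 1) • y (T + 1) := by
        rw [sum_congr rfl weight_succ, ← smul_sum, ← ih]
      _ = ∑ t ∈ Icc m (T + 1), (p t * ∏ s ∈ Icc (t + 1) (T + 1), q s) • y t := by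
        rw [sum_Icc_succ_top (Nat.le_succ_of_le hT),
          Icc_eq_empty (Nat.not_succ_le_self (T + 1)), prod_empty, mul_one]

theorem one_sub_mul_one_sub_add_smul_average
    {R E : Type*} [CommRing R] [AddCommGroup E] [Module R E]
    {β c : R} {x x' y z : E}
    (hy : y = (1 - β) • z + β • x') (hx : x' = (1 - c) • x + c • z) :
    ((1 - c) * (1 - β) + c) • x' = ((1 - c) * (1 - β)) • x + c • y := by
  linear_combination (norm := module) (1 - β) • hx - c • hy

theorem average_eq_div_smul_add_div_smul
    {K E : Type*} [Field K] [AddCommGroup E] [Module K E]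
    {β c : K} {x x' y z : E} (hD : (1 - c) * (1 - β) + c ≠ 0)
    (hy : y = (1 - β) • z + β • x') (hx : x' = (1 - c) • x + c • z) :
    x' = ((1 - c) * (1 - β) / ((1 - c) * (1 - β) + c)) • x +
      (c / ((1 - c) * (1 - β) + c)) • y := by
  set D := (1 - c) * (1 - β) + c
  calc x' = D⁻¹ • D • x' := (inv_smul_smul₀ hD x').symm
    _ = D⁻¹ • (((1 - c) * (1 - β)) • x + c • y) := by
      rw [one_sub_mul_one_sub_add_smul_average hy hx]
    _ = ((1 - c) * (1 - β) / D) • x + (c / D) • y := by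
      rw [smul_add, smul_smul, smul_smul, ← div_eq_inv_mul, ← div_eq_inv_mul]

theorem one_sub_mul_one_sub_add_pos
    {R : Type*} [Ring R] [PartialOrder R] [IsOrderedRing R] {β c : R}
    (hc_pos : 0 < c) (hc_le : c ≤ 1) (hβ : β ≤ 1) : 0 < (1 - c) * (1 - β) + c :=
  add_pos_of_nonneg_of_pos (mul_nonneg (sub_nonneg.mpr hc_le) (sub_nonneg.mpr hβ)) hc_pos

theorem sf_x_is_weighted_average_of_y_general
    {K E : Type*} [Field K] [AddCommGroup E] [Module K E]
    {β : K} {c : ℕ → K} (hD : ∀ t, 1 ≤ t → (1 - c t) * (1 - β) + c t ≠ 0) (hc1 : c 1 = 1)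
    {x y z : ℕ → E} (hz1 : z 1 = x 1)
    (hy : ∀ t, 1 ≤ t → y t = (1 - β) • z t + β • x t)
    (hx : ∀ t, 1 ≤ t → x (t + 1) = (1 - c (t + 1)) • x t + c (t + 1) • z (t + 1))
    {T : ℕ} (hT : 1 ≤ T) :
    x T = ∑ t ∈ Finset.Icc 1 T,
      (c t / ((1 - c t) * (1 - β) + c t) *
        ∏ s ∈ Finset.Icc (t + 1) T, (1 - c s) * (1 - β) / ((1 - c s) * (1 - β) + c s)) • y t := by
  have hxy : x 1 = y 1 := by rw [hy 1 le_rfl, hz1, ← add_smul, sub_add_cancel, one_smul]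
  refine eq_sum_Icc_smul_of_linear_recurrence
    (p := fun t ↦ c t / ((1 - c t) * (1 - β) + c t)) ?_ (fun t ht ↦ ?_) hT
  · simp [hc1, hxy]
  · have ht' : 1 ≤ t + 1 := Nat.le_add_left 1 t
    exact average_eq_div_smul_add_div_smul (hD (t + 1) ht') (hy (t + 1) ht') (hx t ht)

theorem sf_x_is_weighted_average_of_y
    {n : ℕ} (Δ : ℕ → Fin n → ℝ)
    (γ β : ℝ) (hγ : 0 < γ) (hβ : β ∈ Set.Ico (0 : ℝ) 1)
    (c : ℕ → ℝ) (hc : ∀ t : ℕ, 1 ≤ t → c t ∈ Set.Ioc (0 : ℝ) 1) (hc1 : c 1 = 1)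
    (x y z : ℕ → Fin n → ℝ)
    (hz1 : z 1 = x 1)
    (hy : ∀ t : ℕ, 1 ≤ t → y t = (1 - β) • z t + β • x t)
    (hz : ∀ t : ℕ, 1 ≤ t → z (t + 1) = z t - γ • Δ t)
    (hx : ∀ t : ℕ, 1 ≤ t →
      x (t + 1) = (1 - c (t + 1)) • x t + c (t + 1) • z (t + 1))
    -- α T t : the implicit averaging weight of y_t in x_T
    (α : ℕ → ℕ → ℝ)
    (hα : ∀ T t : ℕ, α T t =
      (c t / ((1 - c t) * (1 - β) + c t)) *
        ∏ s ∈ Finset.Icc (t + 1) T,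
          ((1 - c s) * (1 - β) / ((1 - c s) * (1 - β) + c s))) :
    ∀ T : ℕ, 1 ≤ T → x T = ∑ t ∈ Finset.Icc 1 T, α T t • y t := by
  intro T hT
  simpa only [hα] using sf_x_is_weighted_average_of_y_general
    (fun t ht ↦ (one_sub_mul_one_sub_add_pos (hc t ht).1 (hc t ht).2 hβ.2.le).ne') hc1 hz1 hy hx hT
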